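/- If (F,ρ) is a complete CAT(0) metric space and (M,μ) a finite measure space, then L²(M,F) with the distance d₂(f,g) = (∫_M ρ(f,g)² dμ)^{1/2} satisfies the CAT(0) comparison inequality; in particular the space of measurable maps into positive definite Hermitian matrices with finite L² distance to a smooth reference metric is CAT(0). -/

import Mathlib

open MeasureTheory

/-!
Integrating the CN inequality requires `∫⁻ (u + v) ≤ ∫⁻ u + ∫⁻ v` for squared distances, hence the
measurability of `x ↦ edist (h x) (f x)`. For non-separable `F` the distance need not be measurable
for the product σ-algebra; here it is, thanks to the measurable midpoint map. Round `p` to a point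
`i` of a separated net, measurably in `p` by Stone's decomposition along a well-order of the net,
and halve the segment from `i` to `q` until its endpoint `z` is so close to `i` that the distance
from `z` to `i` is the distance from `z` to the whole net, which is a continuous function of `z`.
Rescaling recovers `dist i q`, and refining the net gives `dist p q`.
-/

open Metric Set Function
open Filter (Tendsto atTop)
open scoped NNReal ENNReal Topology

section Net

lemma exists_isSeparated_isCover (X : Type*) [PseudoEMetricSpace X] (ε : ℝ≥0) :
    ∃ N : Set X, IsSeparated ε N ∧ IsCover ε univ N := by
  obtain ⟨N, hN⟩ := zorn_subset {N : Set X | IsSeparated ε N} fun c hc hchain =>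
    ⟨⋃₀ c, (pairwise_sUnion hchain.directedOn).2 hc, fun _ => subset_sUnion_of_mem⟩
  refine ⟨N, hN.prop, IsCover.of_maximal_isSeparated ?_⟩
  simpa only [subset_univ, true_and, mem_ofPred_eq] using hN

lemma infDist_eq_dist_of_isSeparated {X : Type*} [PseudoMetricSpace X] {ε : ℝ≥0} {N : Set X}
    (hN : IsSeparated ε N) {i z : X} (hi : i ∈ N) (hz : 2 * dist z i ≤ ε) :
    infDist z N = dist z i := by
  refine le_antisymm (infDist_le_dist_of_mem hi) ((le_infDist ⟨i, hi⟩).2 fun j hj => ?_)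
  rcases eq_or_ne i j with rfl | hij
  · exact le_rfl
  · have hsep : (ε : ℝ) < dist i j := by
      have h : (ε : ℝ≥0∞) < edist i j := hN hi hj hij
      rwa [edist_nndist, ENNReal.coe_lt_coe] at h
    linarith [dist_triangle_left i j z]

end Net

section MeasurableSelection

variable {X ι : Type*} [PseudoEMetricSpace X] {U : ι → Set X}

/-- The points at distance at least `r` from the complement of `U i` that lie in no earlier `U j`:
the pieces of Stone's decomposition of the sets `U i \ ⋃ j < i, U j`. -/
def stonePiece [LT ι] (U : ι → Set X) (r : ℝ) (i : ι) : Set X :=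
  (thickening r (U i)ᶜ)ᶜ \ ⋃ j < i, U j

lemma isClosed_stonePiece [LT ι] (hU : ∀ i, IsOpen (U i)) (r : ℝ) (i : ι) :
    IsClosed (stonePiece U r i) :=
  isOpen_thickening.isClosed_compl.sdiff (isOpen_biUnion fun j _ => hU j)

lemma le_edist_of_mem_stonePiece [LT ι] {r : ℝ} {i j : ι} (hij : i < j) {x y : X}
    (hx : x ∈ stonePiece U r i) (hy : y ∈ stonePiece U r j) : ENNReal.ofReal r ≤ edist x y := by
  have hyU : y ∈ (U i)ᶜ := fun h => hy.2 (mem_biUnion hij h)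
  by_contra! hlt
  exact hx.1 ((mem_thickening_iff_exists_edist_lt _ _).2 ⟨y, hyU, hlt⟩)

lemma locallyFinite_stonePiece [LinearOrder ι] (U : ι → Set X) {r : ℝ} (hr : 0 < r) :
    LocallyFinite (stonePiece U r) := by
  intro x
  have hpos : 0 < ENNReal.ofReal r / 2 := ENNReal.half_pos (by simpa using hr)
  refine ⟨eball x (ENNReal.ofReal r / 2), eball_mem_nhds x hpos, Set.Subsingleton.finite ?_⟩
  rintro i ⟨y, hyi, hyx⟩ j ⟨z, hzj, hzx⟩
  have hyz : edist y z < ENNReal.ofReal r :=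
    calc edist y z ≤ edist y x + edist z x := edist_triangle_right y z x
      _ < ENNReal.ofReal r / 2 + ENNReal.ofReal r / 2 := ENNReal.add_lt_add hyx hzx
      _ = ENNReal.ofReal r := ENNReal.add_halves _
  rcases lt_trichotomy i j with hij | hij | hji
  · exact absurd hyz (le_edist_of_mem_stonePiece hij hyi hzj).not_gt
  · exact hij
  · exact absurd hyz (edist_comm y z ▸ le_edist_of_mem_stonePiece hji hzj hyi).not_gt

lemma iUnion_stonePiece [LT ι] {i : ι} (hUi : IsOpen (U i)) :
    ⋃ n : ℕ, stonePiece U (1 / ((n : ℝ) + 1)) i = U i \ ⋃ j < i, U j := by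
  have hthick : ⋂ n : ℕ, thickening (1 / ((n : ℝ) + 1)) (U i)ᶜ = (U i)ᶜ := by
    have hclosure := closure_eq_iInter_thickening' (U i)ᶜ (range fun n : ℕ => 1 / ((n : ℝ) + 1))
      (range_subset_iff.2 fun _ => mem_Ioi.2 Nat.one_div_pos_of_nat) fun ε hε => by
        obtain ⟨n, hn⟩ := exists_nat_one_div_lt hε
        exact ⟨_, mem_range_self n, Nat.one_div_pos_of_nat, hn.le⟩
    rw [biInter_range, hUi.isClosed_compl.closure_eq] at hclosure
    exact hclosure.symm
  simp only [stonePiece, ← iUnion_sdiff, ← compl_iInter, hthick, compl_compl]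

variable [MeasurableSpace X] [OpensMeasurableSpace X]

lemma measurableSet_biUnion_diff_biUnion_lt [LinearOrder ι] (hU : ∀ i, IsOpen (U i))
    (T : Set ι) : MeasurableSet (⋃ i ∈ T, U i \ ⋃ j < i, U j) := by
  simp only [← iUnion_stonePiece (hU _), biUnion_eq_iUnion]
  rw [iUnion_comm]
  refine MeasurableSet.iUnion fun n => IsClosed.measurableSet ?_
  exact ((locallyFinite_stonePiece U Nat.one_div_pos_of_nat).comp_injective
    Subtype.val_injective).isClosed_iUnion fun i => isClosed_stonePiece hU _ i

lemma exists_measurable_selection_of_isOpen_cover (hU : ∀ i, IsOpen (U i))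
    (hcover : ∀ x, ∃ i, x ∈ U i) :
    ∃ s : X → ι, Measurable[_, ⊤] s ∧ ∀ x, x ∈ U (s x) := by
  obtain ⟨_, _⟩ := exists_wellFoundedLT ι
  choose s hs_mem hs_min using fun x => wellFounded_lt.has_min {i | x ∈ U i} (hcover x)
  have hs_iff : ∀ x i, s x = i ↔ x ∈ U i \ ⋃ j < i, U j := fun x i => by
    simp only [mem_sdiff, mem_iUnion, not_exists]
    constructor
    · rintro rfl
      exact ⟨hs_mem x, fun j hj hxj => hs_min x j hxj hj⟩
    · rintro ⟨hxi, hfirst⟩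
      exact le_antisymm (not_lt.1 (hs_min x i hxi)) (not_lt.1 fun h => hfirst _ h (hs_mem x))
  refine ⟨s, fun T _ => ?_, hs_mem⟩
  have hpre : s ⁻¹' T = ⋃ i ∈ T, U i \ ⋃ j < i, U j := by
    ext x
    simp only [mem_iUnion, ← hs_iff, exists_prop, exists_eq_right', mem_preimage]
  exact hpre ▸ measurableSet_biUnion_diff_biUnion_lt hU T

end MeasurableSelection

section MeasurableDist

lemma dist_iterate_contraction {F : Type*} [PseudoMetricSpace F] {m : F → F → F} {c : ℝ}
    (hdist : ∀ p q, dist p (m p q) = c * dist p q) (p q : F) (n : ℕ) :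
    dist p ((m p)^[n] q) = c ^ n * dist p q := by
  induction n with
  | zero => simp
  | succ n ih => rw [iterate_succ_apply', hdist, ih, pow_succ', mul_assoc]

variable {F : Type*} [PseudoMetricSpace F] [MeasurableSpace F] [OpensMeasurableSpace F]

lemma exists_measurable_dist_lt_of_isCover {ε δ : ℝ≥0} (hεδ : ε < δ) {N : Set F}
    (hN : IsCover ε univ N) :
    ∃ π : F → F, Measurable π ∧ (∀ p, π p ∈ N) ∧ ∀ p, dist p (π p) < δ := by
  obtain ⟨s, hs, hs_mem⟩ := exists_measurable_selection_of_isOpen_cover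
    (U := fun i : N => ball (i : F) δ) (fun _ => isOpen_ball) fun p => by
      obtain ⟨i, hi, hpi⟩ := hN (mem_univ p)
      refine ⟨⟨i, hi⟩, ?_⟩
      have hdist : edist p i ≤ ε := hpi
      rw [edist_nndist, ENNReal.coe_le_coe] at hdist
      exact (NNReal.coe_le_coe.2 hdist).trans_lt hεδ
  exact ⟨fun p => s p, measurable_from_top.comp hs, fun p => (s p).2, hs_mem⟩

variable {m : F → F → F} {c : ℝ}

lemma measurable_dist_of_mem_isSeparated {α : Type*} [MeasurableSpace α]
    (hm : Measurable (uncurry m)) (hc₀ : 0 < c) (hc₁ : c < 1)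
    (hdist : ∀ p q, dist p (m p q) = c * dist p q) {ε : ℝ≥0} (hε : 0 < ε) {N : Set F}
    (hN : IsSeparated ε N) {u v : α → F} (hu : Measurable u) (huN : ∀ x, u x ∈ N)
    (hv : Measurable v) : Measurable fun x => dist (u x) (v x) := by
  have hiter : ∀ n, Measurable fun x => (m (u x))^[n] (v x) := by
    intro n
    induction n with
    | zero => exact hv
    | succ n ih =>
      simpa only [iterate_succ_apply', comp_def, uncurry_apply_pair] using hm.comp (hu.prodMk ih)
  refine measurable_of_tendsto_metrizable
    (f := fun n x => (c ^ n)⁻¹ * infDist ((m (u x))^[n] (v x)) N)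
    (fun n => (measurable_infDist.comp (hiter n)).const_mul _) (tendsto_pi_nhds.2 fun x => ?_)
  have hlim : Tendsto (fun n => 2 * (c ^ n * dist (u x) (v x))) atTop (𝓝 0) := by
    simpa using ((tendsto_pow_atTop_nhds_zero_of_lt_one hc₀.le hc₁).mul_const _).const_mul 2
  refine tendsto_const_nhds.congr' ?_
  filter_upwards [hlim.eventually_le_const (show (0 : ℝ) < ε from hε)] with n hn
  rw [← dist_iterate_contraction hdist, dist_comm] at hn
  rw [infDist_eq_dist_of_isSeparated hN (huN x) hn, dist_comm _ (u x),
    dist_iterate_contraction hdist, inv_mul_cancel_left₀ (pow_pos hc₀ n).ne']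

theorem measurable_dist_of_contraction (hm : Measurable (uncurry m)) (hc₀ : 0 < c) (hc₁ : c < 1)
    (hdist : ∀ p q, dist p (m p q) = c * dist p q) :
    Measurable fun z : F × F => dist z.1 z.2 := by
  have happrox : ∀ n : ℕ, ∃ π : F → F, (∀ p, dist p (π p) < 2 * (1 / ((n : ℝ) + 1))) ∧
      Measurable fun z : F × F => dist (π z.1) z.2 := by
    intro n
    let ε : ℝ≥0 := 1 / ((n : ℝ≥0) + 1)
    have hε : 0 < ε := by positivity
    obtain ⟨N, hsep, hcover⟩ := exists_isSeparated_isCover F ε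
    obtain ⟨π, hπ, hπN, hπ_near⟩ :=
      exists_measurable_dist_lt_of_isCover (lt_mul_of_one_lt_left hε one_lt_two) hcover
    exact ⟨π, by simpa [ε] using hπ_near, measurable_dist_of_mem_isSeparated hm hc₀ hc₁ hdist hε
      hsep (hπ.comp measurable_fst) (fun z => hπN z.1) measurable_snd⟩
  choose π hπ_near hπ_meas using happrox
  refine measurable_of_tendsto_metrizable hπ_meas (tendsto_pi_nhds.2 fun z => ?_)
  have hπ_tendsto : Tendsto (fun n => π n z.1) atTop (𝓝 z.1) := by
    rw [tendsto_iff_dist_tendsto_zero]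
    refine squeeze_zero (fun _ => dist_nonneg)
      (fun n => (dist_comm (π n z.1) z.1).trans_le (hπ_near n z.1).le) ?_
    simpa using (tendsto_one_div_add_atTop_nhds_zero_nat (𝕜 := ℝ)).const_mul 2
  exact hπ_tendsto.dist tendsto_const_nhds

end MeasurableDist

/-- `m` is a midpoint of `p` and `q` in the sense of the CN inequality of Bruhat and Tits. A
complete metric space is CAT(0) if and only if any two of its points have such a midpoint. The
inequality is stated with `edist` so that it can be integrated without integrability
assumptions. -/
def IsCNMidpoint {F : Type*} [PseudoEMetricSpace F] (m p q : F) : Prop :=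
  ∀ x, edist x m ^ 2 + edist p q ^ 2 / 4 ≤ edist x p ^ 2 / 2 + edist x q ^ 2 / 2

namespace IsCNMidpoint

variable {F : Type*} [PseudoMetricSpace F] {m p q : F}

protected lemma symm (h : IsCNMidpoint m p q) : IsCNMidpoint m q p := fun x => by
  rw [edist_comm q p, add_comm (edist x q ^ 2 / 2)]
  exact h x

lemma dist_left_le (h : IsCNMidpoint m p q) : dist p m ≤ dist p q / 2 := by
  have hCN : edist p m ^ 2 + edist p q ^ 2 / 4 ≤ edist p q ^ 2 / 2 := by simpa using h p
  have hreal : dist p m ^ 2 + dist p q ^ 2 / 4 ≤ dist p q ^ 2 / 2 := by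
    have htoReal := ENNReal.toReal_mono (by finiteness) hCN
    rw [ENNReal.toReal_add (by finiteness) (by finiteness)] at htoReal
    simpa [← dist_edist] using htoReal
  refine le_of_sq_le_sq ?_ (by positivity)
  linarith

lemma dist_left (h : IsCNMidpoint m p q) : dist p m = dist p q / 2 := by
  have hq := h.symm.dist_left_le
  rw [dist_comm q p] at hq
  linarith [h.dist_left_le, dist_triangle_right p q m]

end IsCNMidpoint

section Integral

variable {M : Type*} [MeasurableSpace M] {μ : Measure M}

lemma lintegral_add_div_four_le {A B C D : M → ℝ≥0∞} (hC : AEMeasurable C μ)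
    (h : ∀ x, A x + B x / 4 ≤ C x / 2 + D x / 2) :
    ∫⁻ x, A x ∂μ + (∫⁻ x, B x ∂μ) / 4 ≤ (∫⁻ x, C x ∂μ) / 2 + (∫⁻ x, D x ∂μ) / 2 := by
  have hdiv (u : M → ℝ≥0∞) {r : ℝ≥0∞} (hr : r ≠ 0) : ∫⁻ x, u x / r ∂μ = (∫⁻ x, u x ∂μ) / r := by
    simp only [div_eq_mul_inv, lintegral_mul_const' _ _ (ENNReal.inv_ne_top.2 hr)]
  calc ∫⁻ x, A x ∂μ + (∫⁻ x, B x ∂μ) / 4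
      = ∫⁻ x, A x ∂μ + ∫⁻ x, B x / 4 ∂μ := by rw [hdiv B (by norm_num)]
    _ ≤ ∫⁻ x, A x + B x / 4 ∂μ := le_lintegral_add _ _
    _ ≤ ∫⁻ x, C x / 2 + D x / 2 ∂μ := lintegral_mono h
    _ = ∫⁻ x, C x / 2 ∂μ + ∫⁻ x, D x / 2 ∂μ := lintegral_add_left' (hC.div_const 2) _
    _ = (∫⁻ x, C x ∂μ) / 2 + (∫⁻ x, D x ∂μ) / 2 := by
      rw [hdiv C two_ne_zero, hdiv D two_ne_zero]

variable {F : Type*} [PseudoMetricSpace F] [MeasurableSpace F] [OpensMeasurableSpace F]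

lemma lintegral_edist_sq_lt_top_of_isCNMidpoint {f g m : M → F} {a : F} (hf : AEMeasurable f μ)
    (hm : ∀ x, IsCNMidpoint (m x) (f x) (g x))
    (hfa : ∫⁻ x, edist (f x) a ^ 2 ∂μ < ⊤) (hga : ∫⁻ x, edist (g x) a ^ 2 ∂μ < ⊤) :
    ∫⁻ x, edist (m x) a ^ 2 ∂μ < ⊤ := by
  have hmeas : AEMeasurable (fun x => edist (f x) a) μ :=
    measurable_edist_left.comp_aemeasurable hf
  have hCN := lintegral_add_div_four_le (hmeas.pow_const 2) fun x => by
    simpa only [edist_comm a] using hm x a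
  refine (le_self_add.trans hCN).trans_lt (ENNReal.add_lt_top.2 ⟨?_, ?_⟩)
  · exact ENNReal.div_lt_top hfa.ne two_ne_zero
  · exact ENNReal.div_lt_top hga.ne two_ne_zero

theorem l2_maps_cat0_general (μ : Measure M) (a : F) (mid : F → F → F)
    (hmid_meas : Measurable (uncurry mid)) (hCN : ∀ p q, IsCNMidpoint (mid p q) p q)
    (f g h : M → F) (hf : AEMeasurable f μ) (hh : AEMeasurable h μ)
    (hfa : ∫⁻ x, edist (f x) a ^ 2 ∂μ < ⊤) (hga : ∫⁻ x, edist (g x) a ^ 2 ∂μ < ⊤) :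
    (∫⁻ x, edist (mid (f x) (g x)) a ^ 2 ∂μ < ⊤) ∧
      (∫⁻ x, edist (h x) (mid (f x) (g x)) ^ 2 ∂μ) + (∫⁻ x, edist (f x) (g x) ^ 2 ∂μ) / 4 ≤
        (∫⁻ x, edist (h x) (f x) ^ 2 ∂μ) / 2 + (∫⁻ x, edist (h x) (g x) ^ 2 ∂μ) / 2 := by
  have hdist : Measurable fun z : F × F => dist z.1 z.2 :=
    measurable_dist_of_contraction hmid_meas one_half_pos one_half_lt_one fun p q => by
      rw [(hCN p q).dist_left, div_eq_inv_mul, one_div]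
  have hedist : AEMeasurable (fun x => edist (h x) (f x)) μ := by
    simpa only [edist_dist, comp_def] using (hdist.comp_aemeasurable (hh.prodMk hf)).ennreal_ofReal
  exact ⟨lintegral_edist_sq_lt_top_of_isCNMidpoint hf (fun x => hCN (f x) (g x)) hfa hga,
    lintegral_add_div_four_le (hedist.pow_const 2) fun x => hCN (f x) (g x) (h x)⟩

end Integral

/-- If `(F,ρ)` is a complete CAT(0) metric space — expressed through the CN midpoint
comparison inequality: there is a (measurable) midpoint map `mid` with
`ρ(x, mid p q)² + ρ(p,q)²/4 ≤ ρ(x,p)²/2 + ρ(x,q)²/2` for all `x, p, q` — and `(M,μ)` is a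
finite measure space, then `L²(M,F)` with `d₂(f,g) = (∫ ρ(f,g)² dμ)^{1/2}` satisfies the
same CAT(0) comparison inequality:
`d₂(h, mid∘(f,g))² + d₂(f,g)²/4 ≤ d₂(h,f)²/2 + d₂(h,g)²/2` for all measurable `f, g, h`
of finite `L²` distance to a basepoint.  (In particular this applies to the space of
measurable maps into positive definite Hermitian matrices with finite `L²` distance to a
smooth reference Hermitian metric.) -/
theorem l2_maps_cat0
    {M F : Type*} [MeasurableSpace M] (μ : Measure M) [IsFiniteMeasure μ]
    [MetricSpace F] [CompleteSpace F] [MeasurableSpace F] [BorelSpace F]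
    (a : F)
    (mid : F → F → F) (hmid_meas : Measurable (Function.uncurry mid))
    (hCN : ∀ x p q : F,
      edist x (mid p q) ^ 2 + edist p q ^ 2 / 4 ≤
        edist x p ^ 2 / 2 + edist x q ^ 2 / 2)
    (f g h : M → F)
    (hf : Measurable f) (hg : Measurable g) (hh : Measurable h)
    (hfa : ∫⁻ x, edist (f x) a ^ 2 ∂μ < ⊤)
    (hga : ∫⁻ x, edist (g x) a ^ 2 ∂μ < ⊤)
    (hha : ∫⁻ x, edist (h x) a ^ 2 ∂μ < ⊤) :
    (∫⁻ x, edist (mid (f x) (g x)) a ^ 2 ∂μ < ⊤) ∧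
      (∫⁻ x, edist (h x) (mid (f x) (g x)) ^ 2 ∂μ) +
          (∫⁻ x, edist (f x) (g x) ^ 2 ∂μ) / 4 ≤
        (∫⁻ x, edist (h x) (f x) ^ 2 ∂μ) / 2 +
          (∫⁻ x, edist (h x) (g x) ^ 2 ∂μ) / 2 := by
  exact l2_maps_cat0_general μ a mid hmid_meas (fun p q x => hCN x p q) f g h
    hf.aemeasurable hh.aemeasurable hfa hga
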